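/- arXiv:funct-an/9707009 — 3 statements merged into one kernel-verified Lean document; each statement's English description precedes it below -/
import Mathlib

section
/- Let α be a strongly continuous one-parameter isometric representation on a Banach space E and z ∈ ℂ. Then the analytic continuation α_z is injective and its inverse is α_{-z}; consequently Ran α_z = D(α_{-z}) and D(α_z) = Ran α_{-z}. -/
open Complex MeasureTheory Filter Topology Set

noncomputable section

/-- The closed horizontal strip between the real axis and the line `Im = z.im`. -/
def hStrip (z : ℂ) : Set ℂ := {y : ℂ | y.im ∈ Set.uIcc 0 z.im}

/-- A strongly continuous one-parameter (contractive, hence isometric) representation. -/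
structure IsOneParamRep {E : Type*} [NormedAddCommGroup E] [NormedSpace ℂ E]
    (α : ℝ → E →L[ℂ] E) : Prop where
  map_add : ∀ s t : ℝ, α (s + t) = (α s).comp (α t)
  map_zero : α 0 = ContinuousLinearMap.id ℂ E
  norm_le : ∀ t : ℝ, ‖α t‖ ≤ 1
  strong_cont : ∀ a : E, Continuous fun t : ℝ => α t a

/-- `(a, b)` lies in the graph of the analytic continuation `α_z`:  there is a function `f`,
continuous on the strip `S(z)`, analytic in its interior, agreeing with `t ↦ α_t a` on `ℝ`,
with `f z = b`. -/
def HasContVal {E : Type*} [NormedAddCommGroup E] [NormedSpace ℂ E]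
    (α : ℝ → E →L[ℂ] E) (z : ℂ) (a b : E) : Prop :=
  ∃ f : ℂ → E, ContinuousOn f (hStrip z) ∧
    DifferentiableOn ℂ f (interior (hStrip z)) ∧
    (∀ t : ℝ, f t = α t a) ∧ f z = b

/-- A function continuous on a closed horizontal strip, holomorphic inside it and vanishing on its
lower edge, vanishes on the part of the strip below the upper edge. -/
theorem eq_zero_of_eq_zero_on_real_of_im_lt
    {E : Type*} [NormedAddCommGroup E] [NormedSpace ℂ E] {w : ℝ} {f : ℂ → E}
    (hc : ContinuousOn f {y : ℂ | 0 ≤ y.im ∧ y.im ≤ w})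
    (hd : DifferentiableOn ℂ f {y : ℂ | 0 < y.im ∧ y.im < w})
    (h0 : ∀ t : ℝ, f t = 0) {p : ℂ} (hp0 : 0 ≤ p.im) (hpw : p.im < w) : f p = 0 := by
  have hw : 0 < w := hp0.trans_lt hpw
  set U : Set ℂ := Ioo (p.re - 2 * w) (p.re + 2 * w) ×ℂ Ioo 0 w with hU
  have hUo : IsOpen U := isOpen_Ioo.reProdIm isOpen_Ioo
  have hcl : closure U = Icc (p.re - 2 * w) (p.re + 2 * w) ×ℂ Icc 0 w := by
    rw [hU, closure_reProdIm, closure_Ioo (by linarith), closure_Ioo hw.ne]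
  have hsub : closure U ⊆ {y : ℂ | 0 ≤ y.im ∧ y.im ≤ w} := by
    rw [hcl]; exact fun y hy => hy.2
  have hbdd : Bornology.IsBounded U :=
    (Metric.isBounded_Ioo _ _).reProdIm (Metric.isBounded_Ioo _ _)
  obtain ⟨M, hM⟩ := (hbdd.isCompact_closure).exists_bound_of_continuousOn (hc.mono hsub)
  have hpU : p ∈ closure U := by
    rw [hcl]
    exact ⟨⟨by linarith, by linarith⟩, hp0, hpw.le⟩
  have hM0 : 0 ≤ M := (norm_nonneg _).trans (hM p hpU)
  let ψ : ℂ → ℂ := fun y => -(y - p.re) ^ 2 + I * (3 * w : ℝ) * (y - p.re) + (2 * w ^ 2 : ℝ)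
  have hψ : ∀ y, (ψ y).re = -(y.re - p.re) ^ 2 + (w - y.im) * (2 * w - y.im) := by
    intro y
    simp only [ψ, pow_two, add_re, neg_re, mul_re, mul_im, sub_re, sub_im, ofReal_re, ofReal_im,
      I_re, I_im]
    ring
  have hψd : Differentiable ℂ ψ := by fun_prop
  have hbound : ∀ N : ℝ, 0 ≤ N → Real.exp (N * (ψ p).re) * ‖f p‖ ≤ M := by
    intro N hN
    have key : ‖cexp (N * ψ p) • f p‖ ≤ M := by
      refine norm_le_of_forall_mem_frontier_norm_le (f := fun y => cexp (N * ψ y) • f y)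
        hbdd ⟨?_, ?_⟩ ?_ hpU
      · exact DifferentiableOn.smul (by fun_prop) (hd.mono fun y hy => hy.2)
      · exact ContinuousOn.smul
          (Continuous.continuousOn (by have := hψd.continuous; fun_prop)) (hc.mono hsub)
      · intro y hy
        have hyc := hM y (frontier_subset_closure hy)
        rw [hUo.frontier_eq, hcl] at hy
        obtain ⟨⟨⟨h1, h2⟩, h3, h4⟩, hn⟩ := hy
        simp only [norm_smul, norm_exp, re_ofReal_mul]
        rcases eq_or_lt_of_le h3 with h | h3'
        · have : f y = 0 := by
            rw [← h0 y.re]; congr 1; exact Complex.ext rfl h.symm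
          simpa [this] using hM0
        have hre : (ψ y).re ≤ 0 := by
          rw [hψ]
          by_contra! hpos
          refine hn ⟨⟨?_, ?_⟩, h3', ?_⟩
          · by_contra! h; nlinarith
          · by_contra! h; nlinarith
          · by_contra! h
            obtain rfl : y.im = w := le_antisymm h4 h
            nlinarith [sq_nonneg (y.re - p.re)]
        have : Real.exp (N * (ψ y).re) ≤ 1 :=
          Real.exp_le_one_iff.2 (mul_nonpos_of_nonneg_of_nonpos hN hre)
        exact (mul_le_of_le_one_left (norm_nonneg _) this).trans hyc
    simpa only [norm_smul, norm_exp, re_ofReal_mul] using key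
  have hu : 0 < (ψ p).re := by
    rw [hψ, sub_self]
    have := mul_pos (sub_pos.2 hpw) (show 0 < 2 * w - p.im by linarith)
    linarith
  by_contra hne
  have hfp : 0 < ‖f p‖ := norm_pos_iff.2 hne
  have h1 := hbound (M / ((ψ p).re * ‖f p‖)) (by positivity)
  have h2 := mul_le_mul_of_nonneg_right
    (Real.add_one_le_exp (M / ((ψ p).re * ‖f p‖) * (ψ p).re)) hfp.le
  have h3 : (M / ((ψ p).re * ‖f p‖) * (ψ p).re + 1) * ‖f p‖ = M + ‖f p‖ := by
    field_simp
  linarith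

theorem mapsTo_neg_hStrip (z : ℂ) : MapsTo Neg.neg (hStrip (-z)) (hStrip z) := by
  intro y hy
  simp only [hStrip, mem_ofPred_eq, neg_im, mem_uIcc] at hy ⊢
  rcases hy with h | h
  · right; constructor <;> linarith
  · left; constructor <;> linarith

theorem mapsTo_add_ofReal_hStrip (z : ℂ) (s : ℝ) :
    MapsTo (· + (s : ℂ)) (hStrip z) (hStrip z) := by
  intro y hy
  simpa [hStrip] using hy

theorem mapsTo_add_hStrip_neg (z : ℂ) : MapsTo (· + z) (hStrip (-z)) (hStrip z) := by
  intro y hy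
  simp only [hStrip, mem_ofPred_eq, neg_im, add_im, mem_uIcc] at hy ⊢
  rcases hy with h | h
  · right; constructor <;> linarith
  · left; constructor <;> linarith

/-- A function continuous on the strip, holomorphic inside it and vanishing on `ℝ` is zero. -/
theorem eq_zero_on_hStrip_of_eq_zero_on_real
    {E : Type*} [NormedAddCommGroup E] [NormedSpace ℂ E] {z : ℂ} {f : ℂ → E}
    (hc : ContinuousOn f (hStrip z)) (hd : DifferentiableOn ℂ f (interior (hStrip z)))
    (h0 : ∀ t : ℝ, f t = 0) : EqOn f 0 (hStrip z) := by
  wlog hz : 0 ≤ z.im generalizing z f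
  · have hm := mapsTo_neg_hStrip z
    have hm' : MapsTo Neg.neg (interior (hStrip (-z))) (interior (hStrip z)) :=
      (Homeomorph.neg ℂ).isOpenMap.mapsTo_interior hm
    have H := this (z := -z) (f := fun y => f (-y)) (hc.comp continuousOn_neg hm)
      (hd.comp (differentiableOn_neg _) hm') (fun t => by simpa using h0 (-t))
      (by rw [neg_im]; linarith)
    intro y hy
    have hy' : -y ∈ hStrip (-z) := mapsTo_neg_hStrip (-z) (by simpa using hy)
    simpa using H hy'
  have hS : hStrip z = {y : ℂ | 0 ≤ y.im ∧ y.im ≤ z.im} := by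
    simp [hStrip, uIcc_of_le hz, Icc]
  rw [hS] at hc hd ⊢
  have hsub : {y : ℂ | 0 < y.im ∧ y.im < z.im} ⊆ interior {y : ℂ | 0 ≤ y.im ∧ y.im ≤ z.im} :=
    interior_maximal (fun y hy => ⟨hy.1.le, hy.2.le⟩)
      ((isOpen_lt continuous_const continuous_im).inter
        (isOpen_lt continuous_im continuous_const))
  have hlt : ∀ p : ℂ, 0 ≤ p.im → p.im < z.im → f p = 0 := fun p h1 h2 =>
    eq_zero_of_eq_zero_on_real_of_im_lt hc (hd.mono hsub) h0 h1 h2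
  intro p hp
  rcases hp.2.lt_or_eq with h | h
  · exact hlt p hp.1 h
  rcases hp.1.eq_or_lt with h' | h'
  · rw [Pi.zero_apply, ← h0 p.re]; congr 1; exact Complex.ext rfl h'.symm
  have hline : ContinuousOn (fun t : ℝ => f (p.re + t * I)) (Icc 0 p.im) := by
    refine hc.comp (by fun_prop) fun t ht => ?_
    simpa using ⟨ht.1, ht.2.trans hp.2⟩
  have hzero : EqOn (fun t : ℝ => f (p.re + t * I)) 0 (Icc 0 p.im) := by
    have hcl : closure (Ico 0 p.im) = Icc 0 p.im := closure_Ico h'.ne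
    refine EqOn.of_subset_closure (s := Ico 0 p.im) ?_ hline continuousOn_const
      Ico_subset_Icc_self hcl.ge
    intro t ht
    exact hlt _ (by simpa using ht.1) (by simpa [← h] using ht.2)
  simpa using hzero (right_mem_Icc.2 hp.1)

/-- Two functions continuous on the strip and holomorphic inside it which agree on `ℝ` are equal. -/
theorem eqOn_hStrip_of_eq_on_real
    {E : Type*} [NormedAddCommGroup E] [NormedSpace ℂ E] {z : ℂ} {f g : ℂ → E}
    (hfc : ContinuousOn f (hStrip z)) (hfd : DifferentiableOn ℂ f (interior (hStrip z)))
    (hgc : ContinuousOn g (hStrip z)) (hgd : DifferentiableOn ℂ g (interior (hStrip z)))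
    (h : ∀ t : ℝ, f t = g t) : EqOn f g (hStrip z) := fun _ hy =>
  sub_eq_zero.1 <| eq_zero_on_hStrip_of_eq_zero_on_real (hfc.sub hgc) (hfd.sub hgd)
    (fun t => sub_eq_zero.2 (h t)) hy

theorem HasContVal.unique {E : Type*} [NormedAddCommGroup E] [NormedSpace ℂ E]
    {α : ℝ → E →L[ℂ] E} {z : ℂ} {a b c : E}
    (hb : HasContVal α z a b) (hc : HasContVal α z a c) : b = c := by
  obtain ⟨f, hfc, hfd, hf, rfl⟩ := hb
  obtain ⟨g, hgc, hgd, hg, rfl⟩ := hc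
  exact eqOn_hStrip_of_eq_on_real hfc hfd hgc hgd (fun t => by rw [hf, hg])
    (show z.im ∈ uIcc 0 z.im from right_mem_uIcc)

theorem HasContVal.neg {E : Type*} [NormedAddCommGroup E] [NormedSpace ℂ E]
    {α : ℝ → E →L[ℂ] E} (hα : IsOneParamRep α) {z : ℂ} {a b : E}
    (h : HasContVal α z a b) : HasContVal α (-z) b a := by
  obtain ⟨f, hfc, hfd, hf, rfl⟩ := h
  have hm := mapsTo_add_hStrip_neg z
  have hm' : MapsTo (· + z) (interior (hStrip (-z))) (interior (hStrip z)) :=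
    (Homeomorph.addRight z).isOpenMap.mapsTo_interior hm
  refine ⟨fun y => f (y + z), hfc.comp (by fun_prop) hm, hfd.comp (by fun_prop) hm',
    fun t => ?_, ?_⟩
  · have hs := mapsTo_add_ofReal_hStrip z t
    have hs' : MapsTo (· + (t : ℂ)) (interior (hStrip z)) (interior (hStrip z)) :=
      (Homeomorph.addRight (t : ℂ)).isOpenMap.mapsTo_interior hs
    have H := eqOn_hStrip_of_eq_on_real (f := fun y => f (y + t)) (g := fun y => α t (f y))
      (hfc.comp (by fun_prop) hs) (hfd.comp (by fun_prop) hs')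
      ((α t).continuous.comp_continuousOn hfc)
      ((α t).differentiable.comp_differentiableOn hfd)
      (fun s => by
        rw [← ofReal_add, hf, hf, add_comm, hα.map_add, ContinuousLinearMap.comp_apply])
      (show z.im ∈ uIcc 0 z.im from right_mem_uIcc)
    simpa [add_comm] using H
  · have := hf 0
    simpa [hα.map_zero] using this

theorem hasContVal_neg_iff {E : Type*} [NormedAddCommGroup E] [NormedSpace ℂ E]
    {α : ℝ → E →L[ℂ] E} (hα : IsOneParamRep α) {z : ℂ} {a b : E} :
    HasContVal α (-z) b a ↔ HasContVal α z a b :=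
  ⟨fun h => by simpa using h.neg hα, fun h => h.neg hα⟩

/-- `α_z` is injective with inverse `α_{-z}`; consequently `Ran α_z = D(α_{-z})`
and `D(α_z) = Ran α_{-z}`. -/
theorem cont_injective_inverse
    {E : Type*} [NormedAddCommGroup E] [NormedSpace ℂ E] [CompleteSpace E]
    {α : ℝ → E →L[ℂ] E} (hα : IsOneParamRep α) (z : ℂ) :
    (∀ a b : E, HasContVal α z a b → HasContVal α (-z) b a) ∧
    (∀ a b c : E, HasContVal α z a c → HasContVal α z b c → a = b) ∧
    {b : E | ∃ a, HasContVal α z a b} = {b : E | ∃ c, HasContVal α (-z) b c} ∧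
    {a : E | ∃ b, HasContVal α z a b} = {a : E | ∃ c, HasContVal α (-z) c a} := by
  refine ⟨fun a b h => h.neg hα, fun a b c ha hb => (ha.neg hα).unique (hb.neg hα), ?_, ?_⟩
  · simp only [hasContVal_neg_iff hα]
  · simp only [hasContVal_neg_iff hα]
end
end

section
/- Let α be a strongly continuous one-parameter isometric representation on a Banach space E, K a dense subset of E, and R ⊆ (0,∞) a set having ∞ as a limit point. Let C be the linear span of { a(r) : a ∈ K, r ∈ R }, where a(r) = (r/√π)∫ exp(-r²t²) α_t(a) dt. Then for every z ∈ ℂ, C is a core for the closed operator α_z. -/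
open Complex MeasureTheory Filter Topology Set

noncomputable section

/-- The smeared element `a(r) = (r/√π) ∫ exp (-r²(t-z)²) α_t a dt` (here with `z = 0`). -/
def smear {E : Type*} [NormedAddCommGroup E] [NormedSpace ℂ E]
    (α : ℝ → E →L[ℂ] E) (a : E) (r : ℝ) (z : ℂ) : E :=
  ((r / Real.sqrt Real.pi : ℝ) : ℂ) •
    ∫ t : ℝ, Complex.exp (-(r : ℂ) ^ 2 * ((t : ℂ) - z) ^ 2) • α t a


namespace StripCore

/-- If a scalar function is holomorphic on a strip above the real axis and vanishes on the axis,
then it vanishes on the lower half of the strip: the product of its translates under the four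
rotations of a square resting on the axis vanishes on the boundary of that square. -/
lemma eq_zero_of_im_le_half {f : ℂ → ℂ} {h : ℝ}
    (hc : ContinuousOn f (im ⁻¹' Icc 0 h)) (hd : DifferentiableOn ℂ f (im ⁻¹' Ioo 0 h))
    (h0 : ∀ t : ℝ, f t = 0) {c : ℂ} (hc0 : 0 < c.im) (hch : c.im ≤ h / 2) : f c = 0 := by
  set s := c.im with hs
  set Q : Set ℂ := Ioo (-s) s ×ℂ Ioo (-s) s with hQ
  have hne : -s ≠ s := by linarith
  have hcl : closure Q = Icc (-s) s ×ℂ Icc (-s) s := by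
    rw [hQ, Complex.closure_reProdIm, closure_Ioo hne]
  have hbd : Bornology.IsBounded Q :=
    (Metric.isBounded_Ioo _ _).reProdIm (Metric.isBounded_Ioo _ _)
  have factor : ∀ u : ℂ, (∀ w : ℂ, |(u * w).im| ≤ max |w.re| |w.im|) →
      DiffContOnCl ℂ (fun w ↦ f (c + u * w)) Q := by
    intro u hu
    refine ⟨hd.comp (by fun_prop) fun w hw ↦ ?_, hc.comp (by fun_prop) fun w hw ↦ ?_⟩
    · have h1 : |w.re| < s := abs_lt.2 hw.1
      have h2 : |w.im| < s := abs_lt.2 hw.2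
      have := abs_lt.1 ((hu w).trans_lt (max_lt h1 h2))
      simp only [mem_preimage, add_im, mem_Ioo]
      constructor <;> linarith
    · rw [hcl] at hw
      have h1 : |w.re| ≤ s := abs_le.2 hw.1
      have h2 : |w.im| ≤ s := abs_le.2 hw.2
      have := abs_le.1 ((hu w).trans (max_le h1 h2))
      simp only [mem_preimage, add_im, mem_Icc]
      constructor <;> linarith
  have real_zero : ∀ w : ℂ, w.im = 0 → f w = 0 := fun w hw ↦ by
    rw [← h0 w.re]; congr 1; exact Complex.ext rfl (by simpa using hw)
  have key := Complex.eqOn_of_eqOn_frontier (f := fun w ↦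
      f (c + 1 * w) * f (c + (-1) * w) * (f (c + I * w) * f (c + (-I) * w)))
    (g := fun _ ↦ 0) hbd ?_ diffContOnCl_const ?_ (x := 0) ?_
  · simpa using key
  · have hp := factor 1 (by simp)
    have hm := factor (-1) (by simp)
    have hip := factor I (by simp)
    have him := factor (-I) (by simp)
    exact ⟨(hp.1.mul hm.1).mul (hip.1.mul him.1), (hp.2.mul hm.2).mul (hip.2.mul him.2)⟩
  · intro w hw
    rw [hQ, Complex.frontier_reProdIm, frontier_Ioo (by linarith)] at hw
    rcases hw with hw | hw
    · rcases hw.2 with hw | hw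
      · simp [real_zero (c + w) (by simp only [add_im]; change w.im = -s at hw; linarith)]
      · simp [real_zero (c + -w) (by simp only [add_im, neg_im]; change w.im = s at hw; linarith)]
    · rcases hw.1 with hw | hw
      · simp [real_zero (c + I * w) (by simp; change w.re = -s at hw; linarith)]
      · simp [real_zero (c + -(I * w)) (by simp; change w.re = s at hw; linarith)]
  · simp [hQ, mem_reProdIm, hc0]

variable {E : Type*} [NormedAddCommGroup E] [NormedSpace ℂ E]

lemma eqOn_zero_upper [CompleteSpace E] {f : ℂ → E} {h : ℝ}
    (hc : ContinuousOn f (im ⁻¹' Icc 0 h)) (hd : DifferentiableOn ℂ f (im ⁻¹' Ioo 0 h))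
    (h0 : ∀ t : ℝ, f t = 0) : EqOn f 0 (im ⁻¹' Icc 0 h) := by
  rcases le_or_gt h 0 with hh | hh
  · intro w hw
    have hw0 : w.im = 0 := le_antisymm (hw.2.trans hh) hw.1
    rw [Pi.zero_apply, ← h0 w.re]; congr 1; exact Complex.ext rfl (by simpa using hw0)
  have low : ∀ c : ℂ, 0 < c.im → c.im ≤ h / 2 → f c = 0 := fun c h1 h2 ↦
    SeparatingDual.eq_zero_of_forall_dual_eq_zero (R := ℂ) fun φ ↦
      eq_zero_of_im_le_half (f := fun w ↦ φ (f w)) (φ.continuous.comp_continuousOn hc)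
        (φ.differentiable.comp_differentiableOn hd) (fun t ↦ by simp [h0]) h1 h2
  have hopen : IsOpen (im ⁻¹' Ioo 0 h) := isOpen_Ioo.preimage continuous_im
  have hconv : Convex ℝ (im ⁻¹' Ioo 0 h) := (convex_Ioo 0 h).linear_preimage imLm
  have hin : EqOn f 0 (im ⁻¹' Ioo 0 h) := by
    refine (hd.analyticOnNhd hopen).eqOn_zero_of_preconnected_of_eventuallyEq_zero
      hconv.isPreconnected (z₀ := I * ((h / 4 : ℝ) : ℂ)) ?_ ?_
    · simp only [mem_preimage, I_mul_im, ofReal_re, mem_Ioo]; constructor <;> linarith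
    · have : im ⁻¹' Ioo 0 (h / 2) ∈ 𝓝 (I * ((h / 4 : ℝ) : ℂ)) :=
        (isOpen_Ioo.preimage continuous_im).mem_nhds (by
          simp only [mem_preimage, I_mul_im, ofReal_re, mem_Ioo]; constructor <;> linarith)
      filter_upwards [this] with w hw using low w hw.1 hw.2.le
  refine hin.of_subset_closure hc continuousOn_const (preimage_mono Ioo_subset_Icc_self) ?_
  rw [Complex.closure_preimage_im, closure_Ioo hh.ne]

lemma interior_hStrip (z : ℂ) : interior (hStrip z) = im ⁻¹' Ioo (min 0 z.im) (max 0 z.im) := by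
  change interior (im ⁻¹' Icc (min 0 z.im) (max 0 z.im)) = _
  rw [Complex.interior_preimage_im, interior_Icc]

/-- Functions continuous on the closed strip and holomorphic in its interior. -/
def StripHolo (z : ℂ) (f : ℂ → E) : Prop :=
  ContinuousOn f (hStrip z) ∧ DifferentiableOn ℂ f (interior (hStrip z))

lemma StripHolo.sub {z : ℂ} {f g : ℂ → E} (hf : StripHolo z f) (hg : StripHolo z g) :
    StripHolo z fun w ↦ f w - g w :=
  ⟨hf.1.sub hg.1, hf.2.sub hg.2⟩

lemma StripHolo.clm_comp {z : ℂ} {f : ℂ → E} (hf : StripHolo z f) (T : E →L[ℂ] E) :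
    StripHolo z fun w ↦ T (f w) :=
  ⟨T.continuous.comp_continuousOn hf.1, T.differentiable.comp_differentiableOn hf.2⟩

lemma StripHolo.translate {z : ℂ} {f : ℂ → E} (hf : StripHolo z f) (t : ℝ) :
    StripHolo z fun w ↦ f (w + t) := by
  refine ⟨hf.1.comp (by fun_prop) fun w hw ↦ ?_, hf.2.comp (by fun_prop) fun w hw ↦ ?_⟩
  · simpa [hStrip] using hw
  · rw [interior_hStrip] at hw ⊢
    simpa using hw

/-- A function on the strip is determined by its values on the real axis. -/
lemma StripHolo.eqOn_zero [CompleteSpace E] {z : ℂ} {f : ℂ → E} (hf : StripHolo z f)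
    (h0 : ∀ t : ℝ, f t = 0) : EqOn f 0 (hStrip z) := by
  rcases le_total 0 z.im with hz | hz
  · have hs : hStrip z = im ⁻¹' Icc 0 z.im := by
      ext w; simp [hStrip, uIcc_of_le hz]
    have hi := interior_hStrip z
    rw [min_eq_left hz, max_eq_right hz] at hi
    rw [hs]
    exact eqOn_zero_upper (hs ▸ hf.1) (hi ▸ hf.2) h0
  · have hs : ∀ w, w ∈ hStrip z ↔ -w ∈ im ⁻¹' Icc 0 (-z.im) := by
      intro w
      simp [hStrip, uIcc_of_ge hz, and_comm]
    have hi : ∀ w, w ∈ interior (hStrip z) ↔ -w ∈ im ⁻¹' Ioo 0 (-z.im) := by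
      intro w
      rw [interior_hStrip, min_eq_right hz, max_eq_left hz]
      simp [and_comm]
    have hneg := eqOn_zero_upper (f := fun w ↦ f (-w)) (h := -z.im)
      (hf.1.comp continuousOn_neg fun w hw ↦ (hs _).2 (by simpa using hw))
      (hf.2.comp (by fun_prop) fun w hw ↦ (hi _).2 (by simpa using hw))
      (fun t ↦ by simpa using h0 (-t))
    intro w hw
    simpa using hneg ((hs w).1 hw)

lemma StripHolo.eqOn [CompleteSpace E] {z : ℂ} {f g : ℂ → E} (hf : StripHolo z f)
    (hg : StripHolo z g) (h : ∀ t : ℝ, f t = g t) : EqOn f g (hStrip z) := fun w hw ↦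
  sub_eq_zero.1 ((hf.sub hg).eqOn_zero (fun t ↦ by simp [h t]) hw)

section Representation

variable {α : ℝ → E →L[ℂ] E}

lemma _root_.IsOneParamRep.commute (hα : IsOneParamRep α) (s t : ℝ) (a : E) :
    α s (α t a) = α t (α s a) := by
  have h1 := congrArg (· a) (hα.map_add s t)
  have h2 := congrArg (· a) (hα.map_add t s)
  rw [add_comm t s] at h2
  exact h1.symm.trans h2

lemma _root_.IsOneParamRep.norm_apply_le (hα : IsOneParamRep α) (t : ℝ) (a : E) :
    ‖α t a‖ ≤ ‖a‖ := by
  simpa using (α t).le_of_opNorm_le (hα.norm_le t) a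

/-- The extension of an orbit to the strip is equivariant under real translations. -/
lemma StripHolo.translate_eq [CompleteSpace E] (hα : IsOneParamRep α) {z : ℂ} {a : E} {f : ℂ → E}
    (hf : StripHolo z f) (h : ∀ t : ℝ, f t = α t a) (t : ℝ) {w : ℂ} (hw : w ∈ hStrip z) :
    f (w + t) = α t (f w) := by
  refine (hf.translate t).eqOn (hf.clm_comp (α t)) (fun s ↦ ?_) hw
  rw [h s, add_comm, ← ofReal_add, h, hα.map_add]
  rfl

/-- Three lines theorem for an orbit: its extension is bounded by its values at the two ends. -/
lemma StripHolo.norm_le [CompleteSpace E] (hα : IsOneParamRep α) {z : ℂ} {a : E} {f : ℂ → E}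
    (hf : StripHolo z f) (h : ∀ t : ℝ, f t = α t a) {w : ℂ} (hw : w ∈ hStrip z) :
    ‖f w‖ ≤ max ‖a‖ ‖f z‖ := by
  have vert : ∀ w v : ℂ, v ∈ hStrip z → w.im = v.im → ‖f w‖ ≤ ‖f v‖ := fun w v hv hwv ↦ by
    have : w = v + ((w.re - v.re : ℝ) : ℂ) := Complex.ext (by simp) (by simp [hwv])
    rw [this, hf.translate_eq hα h _ hv]
    exact hα.norm_apply_le _ _
  have hz : z ∈ hStrip z := right_mem_uIcc
  have h0 : (0 : ℂ) ∈ hStrip z := left_mem_uIcc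
  have bot : ∀ w : ℂ, w.im = 0 → ‖f w‖ ≤ max ‖a‖ ‖f z‖ := fun w hw ↦ by
    have h00 : f 0 = a := by simpa [hα.map_zero] using h 0
    exact (vert w 0 h0 hw).trans (h00 ▸ le_max_left _ _)
  have top : ∀ w : ℂ, w.im = z.im → ‖f w‖ ≤ max ‖a‖ ‖f z‖ := fun w hw ↦
    (vert w z hz hw).trans (le_max_right _ _)
  rcases eq_or_ne z.im 0 with hz0 | hz0
  · exact bot w (by simpa [hStrip, hz0] using hw)
  have hlt : min 0 z.im < max 0 z.im := min_lt_max.2 hz0.symm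
  obtain ⟨M, hM⟩ : ∃ M, ∀ y ∈ uIcc 0 z.im, ‖f (I * (y : ℂ))‖ ≤ M := by
    refine isCompact_uIcc.exists_bound_of_continuousOn (hf.1.comp (by fun_prop) fun y hy ↦ ?_)
    simpa [hStrip] using hy
  have edge : ∀ c, c = 0 ∨ c = z.im → ∀ w : ℂ, w.im = c → ‖f w‖ ≤ max ‖a‖ ‖f z‖ := by
    rintro c (rfl | rfl)
    exacts [bot, top]
  refine PhragmenLindelof.horizontal_strip (a := min 0 z.im) (b := max 0 z.im) ?_
    ⟨0, div_pos Real.pi_pos (sub_pos.2 hlt), 0, ?_⟩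
    (edge _ (min_choice _ _)) (edge _ (max_choice _ _)) hw.1 hw.2
  · refine ⟨interior_hStrip z ▸ hf.2, ?_⟩
    rw [Complex.closure_preimage_im, closure_Ioo hlt.ne]
    exact hf.1
  · refine Asymptotics.IsBigO.of_bound M (Eventually.filter_mono inf_le_right ?_)
    rw [eventually_principal]
    intro v hv
    have hv' : v.im ∈ uIcc 0 z.im := Ioo_subset_Icc_self hv
    simpa using (vert v (I * v.im) (by simpa [hStrip] using hv') (by simp)).trans (hM _ hv')

/-- The graph of the analytic continuation is closed. -/
lemma isClosed_graph [CompleteSpace E] (hα : IsOneParamRep α) (z : ℂ) :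
    IsClosed {p : E × E | HasContVal α z p.1 p.2} := by
  refine IsSeqClosed.isClosed fun p q hp hpq ↦ ?_
  choose f hc hd h hfz using hp
  have hf : ∀ n, StripHolo z (f n) := fun n ↦ ⟨hc n, hd n⟩
  have dist_le : ∀ m n, ∀ w ∈ hStrip z, dist (f m w) (f n w) ≤ dist (p m) (p n) := by
    intro m n w hw
    have := ((hf m).sub (hf n)).norm_le hα (a := (p m).1 - (p n).1) (fun t ↦ by simp [h]) hw
    simp only [hfz] at this
    rw [Prod.dist_eq]
    simpa only [dist_eq_norm] using this
  have hcau : UniformCauchySeqOn f atTop (hStrip z) := by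
    rw [Metric.uniformCauchySeqOn_iff]
    intro ε hε
    obtain ⟨N, hN⟩ := Metric.cauchySeq_iff.1 hpq.cauchySeq ε hε
    exact ⟨N, fun m hm n hn w hw ↦ (dist_le m n w hw).trans_lt (hN m hm n hn)⟩
  have hlim : ∀ w, ∃ l, w ∈ hStrip z → Tendsto (fun n ↦ f n w) atTop (𝓝 l) := fun w ↦ by
    by_cases hw : w ∈ hStrip z
    · obtain ⟨l, hl⟩ := cauchySeq_tendsto_of_complete (hcau.cauchySeq hw)
      exact ⟨l, fun _ ↦ hl⟩
    · exact ⟨0, fun h ↦ absurd h hw⟩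
  choose g hg using hlim
  have hunif := hcau.tendstoUniformlyOn_of_tendsto hg
  refine ⟨g, hunif.continuousOn (Frequently.of_forall hc), ?_, fun t ↦ ?_, ?_⟩
  · exact (hunif.mono interior_subset).tendstoLocallyUniformlyOn.differentiableOn
      (Eventually.of_forall hd) isOpen_interior
  · refine tendsto_nhds_unique (hg t (by simp [hStrip])) ?_
    simp only [h]
    exact ((α t).continuous.tendsto _).comp ((continuous_fst.tendsto _).comp hpq)
  · refine tendsto_nhds_unique (hg z right_mem_uIcc) ?_
    simp only [hfz]
    exact (continuous_snd.tendsto _).comp hpq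

/-- The analytic continuation is single-valued. -/
lemma _root_.HasContVal.unique_s10 [CompleteSpace E] {z : ℂ} {a b c : E} (hb : HasContVal α z a b)
    (hc : HasContVal α z a c) : b = c := by
  obtain ⟨f, hf1, hf2, hf, rfl⟩ := hb
  obtain ⟨g, hg1, hg2, hg, rfl⟩ := hc
  exact StripHolo.eqOn ⟨hf1, hf2⟩ ⟨hg1, hg2⟩ (fun t ↦ by rw [hf, hg]) right_mem_uIcc

end Representation

section Smear

variable {α : ℝ → E →L[ℂ] E}

lemma integrable_gaussian_kernel {r : ℝ} (hr : 0 < r) (z : ℂ) :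
    Integrable fun t : ℝ ↦ cexp (-(r : ℂ) ^ 2 * ((t : ℂ) - z) ^ 2) := by
  have hb : (-(r : ℂ) ^ 2).re < 0 := by
    have : (-(r : ℂ) ^ 2) = ((-r ^ 2 : ℝ) : ℂ) := by push_cast; ring
    rw [this, ofReal_re]
    nlinarith
  refine (integrable_cexp_quadratic' hb (2 * r ^ 2 * z) (-r ^ 2 * z ^ 2)).congr
    (Eventually.of_forall fun t ↦ ?_)
  simp only
  congr 1
  ring

lemma integrable_smul_orbit (hα : IsOneParamRep α) (a : E) {k : ℝ → ℂ} (hk : Integrable k) :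
    Integrable fun t : ℝ ↦ k t • α t a := by
  refine (hk.norm.mul_const ‖a‖).mono'
    (hk.aestronglyMeasurable.smul (hα.strong_cont a).aestronglyMeasurable)
    (Eventually.of_forall fun t ↦ ?_)
  rw [norm_smul]
  gcongr
  exact hα.norm_apply_le t a

lemma integrable_smear (hα : IsOneParamRep α) (a : E) {r : ℝ} (hr : 0 < r) (z : ℂ) :
    Integrable fun t : ℝ ↦ cexp (-(r : ℂ) ^ 2 * ((t : ℂ) - z) ^ 2) • α t a :=
  integrable_smul_orbit hα a (integrable_gaussian_kernel hr z)

/-- Smearing, as a bounded operator. -/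
lemma exists_smear_clm (hα : IsOneParamRep α) {r : ℝ} (hr : 0 < r) (z : ℂ) :
    ∃ T : E →L[ℂ] E, ∀ a, T a = smear α a r z := by
  let L : E →ₗ[ℂ] E :=
    { toFun := fun a ↦ smear α a r z
      map_add' := fun a b ↦ by
        simp only [smear, map_add, smul_add]
        rw [integral_add (integrable_smear hα a hr z) (integrable_smear hα b hr z), smul_add]
      map_smul' := fun c a ↦ by
        simp only [smear, map_smul, RingHom.id_apply]
        simp_rw [smul_comm _ c]
        rw [integral_smul, smul_comm] }
  refine ⟨L.mkContinuous (‖((r / √Real.pi : ℝ) : ℂ)‖ *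
    ∫ t : ℝ, ‖cexp (-(r : ℂ) ^ 2 * ((t : ℂ) - z) ^ 2)‖) fun a ↦ ?_, fun a ↦ rfl⟩
  change ‖smear α a r z‖ ≤ _
  rw [smear, norm_smul, mul_assoc, ← integral_mul_const]
  gcongr
  refine norm_integral_le_of_norm_le ((integrable_gaussian_kernel hr z).norm.mul_const _)
    (Eventually.of_forall fun t ↦ ?_)
  rw [norm_smul]
  gcongr
  exact hα.norm_apply_le t a

lemma smear_apply_comm [CompleteSpace E] (hα : IsOneParamRep α) (a : E) {r : ℝ} (hr : 0 < r)
    (z : ℂ) (s : ℝ) : smear α (α s a) r z = α s (smear α a r z) := by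
  simp only [smear, map_smul]
  rw [← ContinuousLinearMap.integral_comp_comm _ (integrable_smear hα a hr z)]
  simp only [map_smul, hα.commute s]

lemma smear_ofReal [CompleteSpace E] (hα : IsOneParamRep α) (a : E) {r : ℝ} (hr : 0 < r) (s : ℝ) :
    smear α a r s = α s (smear α a r 0) := by
  simp only [smear, map_smul]
  rw [← ContinuousLinearMap.integral_comp_comm _ (integrable_smear hα a hr 0)]
  refine congrArg _ (Eq.trans ?_ (integral_sub_right_eq_self
    (fun t : ℝ ↦ α s (cexp (-(r : ℂ) ^ 2 * ((t : ℂ) - 0) ^ 2) • α t a)) s))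
  congr 1 with t
  rw [map_smul]
  have := congrArg (· a) (hα.map_add s (t - s))
  rw [add_sub_cancel] at this
  simp only [ContinuousLinearMap.comp_apply] at this
  rw [this]
  simp

lemma norm_gaussian_deriv_le {r M : ℝ} {w : ℂ} (hw : ‖w‖ ≤ M) (t : ℝ) :
    ‖cexp (-(r : ℂ) ^ 2 * ((t : ℂ) - w) ^ 2) * (2 * r ^ 2 * (t - w))‖ ≤
      Real.exp (-r ^ 2 * t ^ 2 + 2 * r ^ 2 * (M + 1) * t + r ^ 2 * (M ^ 2 + 2 * M)) +
      Real.exp (-r ^ 2 * t ^ 2 + -(2 * r ^ 2 * (M + 1)) * t + r ^ 2 * (M ^ 2 + 2 * M)) := by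
  have h2 : ‖(2 * r ^ 2 * (t - w) : ℂ)‖ ≤ Real.exp (2 * r ^ 2 * (|t| + M)) := by
    have h3 : ‖(t - w : ℂ)‖ ≤ |t| + M :=
      (norm_sub_le _ _).trans (by rw [Complex.norm_real, Real.norm_eq_abs]; gcongr)
    have h4 : ‖(2 * r ^ 2 * (t - w) : ℂ)‖ = 2 * r ^ 2 * ‖(t - w : ℂ)‖ := by
      simp
    rw [h4]
    have : 2 * r ^ 2 * ‖(t - w : ℂ)‖ ≤ 2 * r ^ 2 * (|t| + M) := by gcongr
    linarith [Real.add_one_le_exp (2 * r ^ 2 * (|t| + M))]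
  have h1 : ‖cexp (-(r : ℂ) ^ 2 * ((t : ℂ) - w) ^ 2)‖ ≤
      Real.exp (-r ^ 2 * t ^ 2 + 2 * r ^ 2 * M * |t| + r ^ 2 * M ^ 2) := by
    rw [Complex.norm_exp]
    gcongr
    have hre : (-(r : ℂ) ^ 2 * ((t : ℂ) - w) ^ 2).re =
        -r ^ 2 * t ^ 2 + r ^ 2 * (2 * (t * w.re) + (w.im ^ 2 - w.re ^ 2)) := by
      have : -(r : ℂ) ^ 2 = ((-r ^ 2 : ℝ) : ℂ) := by push_cast; ring
      rw [this, re_ofReal_mul, sq ((t : ℂ) - w), mul_re]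
      simp
      ring
    have h5 : t * w.re ≤ |t| * M := by
      refine (le_abs_self _).trans ?_
      rw [abs_mul]
      gcongr
      exact (abs_re_le_norm w).trans hw
    have h6 : w.im ^ 2 - w.re ^ 2 ≤ M ^ 2 := by
      have : w.im ^ 2 ≤ M ^ 2 := by
        rw [← sq_abs]
        gcongr
        exact (abs_im_le_norm w).trans hw
      nlinarith [sq_nonneg w.re]
    rw [hre]
    nlinarith [mul_le_mul_of_nonneg_left (add_le_add (mul_le_mul_of_nonneg_left h5 zero_le_two) h6)
      (sq_nonneg r)]
  rw [norm_mul]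
  calc _ ≤ _ := mul_le_mul h1 h2 (norm_nonneg _) (Real.exp_pos _).le
    _ = Real.exp (-r ^ 2 * t ^ 2 + 2 * r ^ 2 * (M + 1) * |t| + r ^ 2 * (M ^ 2 + 2 * M)) := by
      rw [← Real.exp_add]
      congr 1
      ring
    _ ≤ _ := by
      rcases abs_cases t with ⟨ht, -⟩ | ⟨ht, -⟩ <;> rw [ht]
      · exact le_add_of_nonneg_right (Real.exp_pos _).le
      · rw [mul_neg, ← neg_mul]
        exact le_add_of_nonneg_left (Real.exp_pos _).le

lemma integrable_exp_quadratic {b : ℝ} (hb : b < 0) (c d : ℝ) :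
    Integrable fun t : ℝ ↦ Real.exp (b * t ^ 2 + c * t + d) := by
  refine (integrable_cexp_quadratic' (b := b) (by simpa using hb) c d).norm.congr
    (Eventually.of_forall fun t ↦ ?_)
  simp only [Complex.norm_exp]
  congr 1
  norm_cast

lemma differentiable_smear (hα : IsOneParamRep α) (a : E) {r : ℝ} (hr : 0 < r) :
    Differentiable ℂ (smear α a r) := by
  refine Differentiable.const_smul (fun w₀ ↦ ?_) _
  have hr2 : -r ^ 2 < 0 := by nlinarith
  set M := ‖w₀‖ + 1
  have hM : 0 ≤ M := by positivity
  refine (hasDerivAt_integral_of_dominated_loc_of_deriv_le (s := Metric.ball w₀ 1)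
    (F' := fun w t ↦ (cexp (-(r : ℂ) ^ 2 * ((t : ℂ) - w) ^ 2) * (2 * r ^ 2 * (t - w))) • α t a)
    (bound := fun t ↦
      (Real.exp (-r ^ 2 * t ^ 2 + 2 * r ^ 2 * (M + 1) * t + r ^ 2 * (M ^ 2 + 2 * M)) +
      Real.exp (-r ^ 2 * t ^ 2 + -(2 * r ^ 2 * (M + 1)) * t + r ^ 2 * (M ^ 2 + 2 * M))) * ‖a‖)
    (Metric.ball_mem_nhds _ one_pos)
    (Eventually.of_forall fun w ↦ (integrable_smear hα a hr w).aestronglyMeasurable)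
    (integrable_smear hα a hr w₀) ?_ ?_ ?_ ?_).2.differentiableAt
  · have := hα.strong_cont a
    exact Continuous.aestronglyMeasurable (by fun_prop)
  · refine Eventually.of_forall fun t w hw ↦ ?_
    have hwM : ‖w‖ ≤ M := by
      rw [mem_ball_iff_norm] at hw
      linarith [norm_le_norm_add_norm_sub' w w₀]
    rw [norm_smul]
    exact mul_le_mul (norm_gaussian_deriv_le hwM t) (hα.norm_apply_le t a) (norm_nonneg _)
      (by positivity)
  · exact ((integrable_exp_quadratic hr2 _ _).add (integrable_exp_quadratic hr2 _ _)).mul_const _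
  · refine Eventually.of_forall fun t w _ ↦ HasDerivAt.smul_const ?_ _
    have h1 : HasDerivAt (fun w : ℂ ↦ (t : ℂ) - w) (-1) w := (hasDerivAt_id w).const_sub _
    refine ((h1.pow 2).const_mul (-(r : ℂ) ^ 2)).cexp.congr_deriv ?_
    simp only [Pi.pow_apply]
    push_cast
    ring

/-- The Gaussian smearings form an approximate identity. -/
lemma tendsto_smear [CompleteSpace E] (hα : IsOneParamRep α) (a : E) :
    Tendsto (fun r : ℝ ↦ smear α a r 0) atTop (𝓝 a) := by
  have hk : Integrable fun u : ℝ ↦ cexp (-(u : ℂ) ^ 2) := by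
    simpa using integrable_gaussian_kernel one_pos 0
  have hlim : Tendsto (fun r : ℝ ↦ ∫ u : ℝ, cexp (-(u : ℂ) ^ 2) • α (u / r) a) atTop
      (𝓝 (∫ u : ℝ, cexp (-(u : ℂ) ^ 2) • a)) := by
    refine tendsto_integral_filter_of_dominated_convergence
      (fun u ↦ ‖cexp (-(u : ℂ) ^ 2)‖ * ‖a‖) (Eventually.of_forall fun r ↦ ?_)
      (Eventually.of_forall fun r ↦ Eventually.of_forall fun u ↦ ?_) (hk.norm.mul_const _)
      (Eventually.of_forall fun u ↦ ?_)
    · have := (hα.strong_cont a).comp (continuous_id.div_const r)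
      exact hk.aestronglyMeasurable.smul this.aestronglyMeasurable
    · rw [norm_smul]
      gcongr
      exact hα.norm_apply_le _ a
    · have h1 : Tendsto (fun r : ℝ ↦ u / r) atTop (𝓝 0) := tendsto_const_nhds.div_atTop tendsto_id
      have h2 := ((hα.strong_cont a).tendsto 0).comp h1
      simp only [hα.map_zero, ContinuousLinearMap.id_apply] at h2
      exact h2.const_smul _
  have hval : ∫ u : ℝ, cexp (-(u : ℂ) ^ 2) • a = ((√Real.pi : ℝ) : ℂ) • a := by
    rw [integral_smul_const]
    congr 1
    have h := integral_gaussian 1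
    rw [div_one] at h
    rw [← h, ← integral_complex_ofReal]
    congr 1 with u
    simp
  rw [hval] at hlim
  have hpi : ((√Real.pi : ℝ) : ℂ) ≠ 0 := by
    exact_mod_cast (Real.sqrt_pos.2 Real.pi_pos).ne'
  have hlim' := hlim.const_smul ((√Real.pi : ℝ) : ℂ)⁻¹
  rw [inv_smul_smul₀ hpi] at hlim'
  refine hlim'.congr' ?_
  filter_upwards [eventually_gt_atTop 0] with r hr
  have hsub := Measure.integral_comp_mul_left (fun u : ℝ ↦ cexp (-(u : ℂ) ^ 2) • α (u / r) a) r
  have hr0 : (r : ℂ) ≠ 0 := by exact_mod_cast hr.ne'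
  have heq : ∫ t : ℝ, cexp (-(r : ℂ) ^ 2 * ((t : ℂ) - 0) ^ 2) • α t a =
      ∫ t : ℝ, cexp (-((r * t : ℝ) : ℂ) ^ 2) • α (r * t / r) a := by
    congr 1 with t
    rw [mul_div_cancel_left₀ _ hr.ne', sub_zero, ofReal_mul, mul_pow, neg_mul]
  rw [smear, heq, hsub, abs_of_pos (inv_pos.2 hr), ← Complex.coe_smul, smul_smul]
  congr 1
  push_cast
  field_simp

lemma hasContVal_smear [CompleteSpace E] (hα : IsOneParamRep α) (a : E) {r : ℝ} (hr : 0 < r)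
    (z : ℂ) : HasContVal α z (smear α a r 0) (smear α a r z) :=
  ⟨smear α a r, (differentiable_smear hα a hr).continuous.continuousOn,
    (differentiable_smear hα a hr).differentiableOn, smear_ofReal hα a hr, rfl⟩

/-- Smearing commutes with the analytic continuation. -/
lemma _root_.HasContVal.smear_eq [CompleteSpace E] (hα : IsOneParamRep α) {z : ℂ} {a b : E}
    (h : HasContVal α z a b) {r : ℝ} (hr : 0 < r) : smear α a r z = smear α b r 0 := by
  obtain ⟨T, hT⟩ := exists_smear_clm hα hr 0
  refine (hasContVal_smear hα a hr z).unique_s10 ?_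
  obtain ⟨f, hc, hd, hf, rfl⟩ := h
  have hTf := StripHolo.clm_comp ⟨hc, hd⟩ T
  exact ⟨_, hTf.1, hTf.2, fun t ↦ by rw [hf, hT, smear_apply_comm hα a hr], hT _⟩

end Smear

end StripCore

open StripCore

/-- If `K ⊆ E` is dense and `R ⊆ (0,∞)` has `∞` as a limit point, then the span of the
smeared elements `{a(r) : a ∈ K, r ∈ R}` is a core for `α_z`: the closure of the graph of
`α_z` restricted to this span is the whole graph of `α_z`. -/
theorem smeared_core
    {E : Type*} [NormedAddCommGroup E] [NormedSpace ℂ E] [CompleteSpace E]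
    {α : ℝ → E →L[ℂ] E} (hα : IsOneParamRep α)
    (K : Set E) (hK : Dense K)
    (R : Set ℝ) (hRpos : R ⊆ Set.Ioi (0 : ℝ)) (hRinf : ∀ M : ℝ, ∃ r ∈ R, M < r)
    (z : ℂ) :
    closure {p : E × E |
        p.1 ∈ (Submodule.span ℂ {x : E | ∃ a ∈ K, ∃ r ∈ R, x = smear α a r 0} : Set E) ∧
        HasContVal α z p.1 p.2}
      = {p : E × E | HasContVal α z p.1 p.2} := by
  refine Subset.antisymm
    (closure_minimal (fun p hp ↦ hp.2) (isClosed_graph hα z)) fun ⟨a, b⟩ hab ↦ ?_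
  rw [mem_ofPred_eq] at hab
  have hfreq : ∃ᶠ r in atTop, r ∈ R := by
    rw [frequently_atTop]
    exact fun M ↦ let ⟨r, hr, hMr⟩ := hRinf M; ⟨r, hMr.le, hr⟩
  have hlim : Tendsto (fun r ↦ (smear α a r 0, smear α b r 0)) atTop (𝓝 (a, b)) :=
    (tendsto_smear hα a).prodMk_nhds (tendsto_smear hα b)
  rw [← closure_closure]
  refine mem_closure_of_frequently_of_tendsto (hfreq.mono fun r hrR ↦ ?_) hlim
  have hr : 0 < r := hRpos hrR
  obtain ⟨S, hS⟩ := exists_smear_clm hα hr 0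
  obtain ⟨T, hT⟩ := exists_smear_clm hα hr z
  rw [← hab.smear_eq hα hr, ← hS, ← hT]
  refine map_mem_closure (f := fun x ↦ (S x, T x)) (by fun_prop) (hK a) fun x hx ↦ ?_
  refine ⟨Submodule.subset_span ⟨x, hx, r, hrR, hS x⟩, ?_⟩
  simp only [hS, hT]
  exact hasContVal_smear hα x hr z
end
end

section
/- Let α be a strongly continuous one-parameter isometric representation on a Banach space E, and let K ⊆ E* be a separating set of functionals with θ ∘ α_t ∈ K for all θ ∈ K, t ∈ ℝ. Let z ∈ ℂ and v, w ∈ E be such that for every θ ∈ K there exists a function f_θ : S(z) → ℂ, bounded and continuous on S(z), analytic on its interior, with f_θ(t) = θ(α_t(v)) for all t ∈ ℝ and f_θ(z) = θ(w). Then v ∈ D(α_z) and α_z(v) = w. -/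
open Complex MeasureTheory Filter Topology Set

noncomputable section

theorem mem_hStrip {z u : ℂ} : u ∈ hStrip z ↔ u.im ∈ uIcc 0 z.im := Iff.rfl

theorem ofReal_mem_hStrip (z : ℂ) (t : ℝ) : (t : ℂ) ∈ hStrip z := by
  simp [mem_hStrip]

theorem self_mem_hStrip (z : ℂ) : z ∈ hStrip z := by
  simp [mem_hStrip]

theorem add_ofReal_mem_hStrip {z u : ℂ} (hu : u ∈ hStrip z) (t : ℝ) : u + t ∈ hStrip z := by
  simpa [mem_hStrip] using hu

theorem interior_hStrip (z : ℂ) :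
    interior (hStrip z) = im ⁻¹' Ioo (min 0 z.im) (max 0 z.im) := by
  change interior (im ⁻¹' uIcc 0 z.im) = _
  rw [interior_preimage_im, uIcc, interior_Icc]

theorem add_ofReal_mem_interior_hStrip {z u : ℂ} (hu : u ∈ interior (hStrip z)) (t : ℝ) :
    u + t ∈ interior (hStrip z) := by
  simpa [interior_hStrip] using hu

/-- The map `ζ ↦ I * z.im * ζ` sends the closed unit vertical strip onto `hStrip z`. -/
theorem exists_unit_strip_param {z u : ℂ} (hz : z.im ≠ 0) (hu : u ∈ hStrip z) :
    ∃ ζ ∈ HadamardThreeLines.verticalClosedStrip 0 1, I * z.im * ζ = u := by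
  have hz' : (z.im : ℂ) ≠ 0 := by exact_mod_cast hz
  refine ⟨u / (I * z.im), ?_, by field_simp [I_ne_zero]⟩
  have hre : (u / (I * z.im)).re = u.im / z.im := by
    rw [← div_div, div_ofReal_re]
    simp
  simp only [HadamardThreeLines.verticalClosedStrip, mem_preimage, hre]
  rw [mem_hStrip, mem_uIcc] at hu
  rcases hu with ⟨h0, h1⟩ | ⟨h1, h0⟩
  · exact ⟨div_nonneg h0 (h0.trans h1), div_le_one_of_le₀ h1 (h0.trans h1)⟩
  · exact ⟨div_nonneg_of_nonpos h0 (h1.trans h0), div_le_one_of_ge h1 (h1.trans h0)⟩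

theorem mapsTo_unit_closedStrip (z : ℂ) :
    MapsTo (fun ζ : ℂ => I * z.im * ζ) (HadamardThreeLines.verticalClosedStrip 0 1)
      (hStrip z) := by
  intro ζ hζ
  simp only [HadamardThreeLines.verticalClosedStrip, mem_preimage, mem_Icc] at hζ
  rw [mem_hStrip, mem_uIcc]
  have : (I * z.im * ζ).im = z.im * ζ.re := by simp [mul_assoc]
  rw [this]
  rcases le_total 0 z.im with h | h
  · left; constructor <;> nlinarith
  · right; constructor <;> nlinarith

theorem mapsTo_unit_strip {z : ℂ} (hz : z.im ≠ 0) :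
    MapsTo (fun ζ : ℂ => I * z.im * ζ) (HadamardThreeLines.verticalStrip 0 1)
      (interior (hStrip z)) := by
  intro ζ hζ
  simp only [HadamardThreeLines.verticalStrip, mem_preimage, mem_Ioo] at hζ
  have : (I * z.im * ζ).im = z.im * ζ.re := by simp [mul_assoc]
  rw [interior_hStrip, mem_preimage, this]
  rcases lt_or_gt_of_ne hz with h | h
  · rw [min_eq_right h.le, max_eq_left h.le]; constructor <;> nlinarith
  · rw [min_eq_left h.le, max_eq_right h.le]; constructor <;> nlinarith

theorem closure_verticalStrip_zero_one :
    closure (HadamardThreeLines.verticalStrip 0 1)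
      = HadamardThreeLines.verticalClosedStrip 0 1 := by
  change closure (re ⁻¹' Ioo 0 1) = re ⁻¹' Icc 0 1
  rw [closure_preimage_re, closure_Ioo zero_ne_one]

section ThreeLines

variable {F : Type*} [NormedAddCommGroup F] [NormedSpace ℂ F] {z : ℂ} {g : ℂ → F}

theorem three_lines_unit_strip (hz : z.im ≠ 0) (hbd : ∃ M : ℝ, ∀ u ∈ hStrip z, ‖g u‖ ≤ M)
    (hc : ContinuousOn g (hStrip z)) (hd : DifferentiableOn ℂ g (interior (hStrip z)))
    {a b : ℝ} (ha : ∀ t : ℝ, ‖g t‖ ≤ a) (hb : ∀ t : ℝ, ‖g (z + t)‖ ≤ b)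
    {ζ : ℂ} (hζ : ζ ∈ HadamardThreeLines.verticalClosedStrip 0 1) :
    ‖g (I * z.im * ζ)‖ ≤ a ^ (1 - ζ.re) * b ^ ζ.re := by
  obtain ⟨M, hM⟩ := hbd
  have hlin : Differentiable ℂ fun ζ : ℂ => I * z.im * ζ := differentiable_id.const_mul _
  refine HadamardThreeLines.norm_le_interp_of_mem_verticalClosedStrip₀₁'
    (fun ζ => g (I * z.im * ζ)) hζ
    ⟨hd.comp hlin.differentiableOn (mapsTo_unit_strip hz), ?_⟩ ?_ ?_ ?_
  · rw [closure_verticalStrip_zero_one]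
    exact hc.comp hlin.continuous.continuousOn (mapsTo_unit_closedStrip z)
  · refine ⟨M, ?_⟩
    rintro _ ⟨ξ, hξ, rfl⟩
    exact hM _ (mapsTo_unit_closedStrip z hξ)
  · intro ξ hξ
    have hξ : ξ.re = 0 := hξ
    have : I * z.im * ξ = ((-(z.im * ξ.im) : ℝ) : ℂ) := by
      apply Complex.ext <;> simp [mul_assoc, hξ]
    rw [this]
    exact ha _
  · intro ξ hξ
    have hξ : ξ.re = 1 := hξ
    have : I * z.im * ξ = z + ((-(z.im * ξ.im) - z.re : ℝ) : ℂ) := by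
      apply Complex.ext <;> simp [mul_assoc, hξ]
    rw [this]
    exact hb _

/-- Maximum principle on a strip for bounded functions. -/
theorem norm_le_of_norm_le_boundary (hbd : ∃ M : ℝ, ∀ u ∈ hStrip z, ‖g u‖ ≤ M)
    (hc : ContinuousOn g (hStrip z)) (hd : DifferentiableOn ℂ g (interior (hStrip z)))
    {C : ℝ} (ha : ∀ t : ℝ, ‖g t‖ ≤ C) (hb : ∀ t : ℝ, ‖g (z + t)‖ ≤ C) :
    ∀ u ∈ hStrip z, ‖g u‖ ≤ C := by
  intro u hu
  by_cases hz : z.im = 0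
  · have : u = ((u.re : ℝ) : ℂ) := by
      apply Complex.ext
      · simp
      · simpa [mem_hStrip, hz] using hu
    rw [this]
    exact ha _
  · obtain ⟨ζ, hζ, rfl⟩ := exists_unit_strip_param hz hu
    have hC : 0 ≤ C := (norm_nonneg _).trans (ha 0)
    have h := three_lines_unit_strip hz hbd hc hd ha hb hζ
    rwa [← Real.rpow_add' hC (by simp), sub_add_cancel, Real.rpow_one] at h

/-- A bounded function on a strip that vanishes on the real line vanishes on the strip. -/
theorem eq_zero_of_eq_zero_real (hbd : ∃ M : ℝ, ∀ u ∈ hStrip z, ‖g u‖ ≤ M)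
    (hc : ContinuousOn g (hStrip z)) (hd : DifferentiableOn ℂ g (interior (hStrip z)))
    (h0 : ∀ t : ℝ, g t = 0) : ∀ u ∈ hStrip z, g u = 0 := by
  intro u hu
  by_cases hz : z.im = 0
  · have : u = ((u.re : ℝ) : ℂ) := by
      apply Complex.ext
      · simp
      · simpa [mem_hStrip, hz] using hu
    rw [this]
    exact h0 _
  · obtain ⟨M, hM⟩ := hbd
    have hopen : EqOn (fun ζ : ℂ => g (I * z.im * ζ)) 0
        (HadamardThreeLines.verticalStrip 0 1) := by
      intro ζ hζ
      have h := three_lines_unit_strip hz ⟨M, hM⟩ hc hd (a := 0) (b := M)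
        (fun t => by simp [h0]) (fun t => hM _ (add_ofReal_mem_hStrip (self_mem_hStrip z) t))
        ⟨hζ.1.le, hζ.2.le⟩
      rw [Real.zero_rpow (by linarith [hζ.2]), zero_mul] at h
      simpa using h
    obtain ⟨ζ, hζ, rfl⟩ := exists_unit_strip_param hz hu
    refine hopen.of_subset_closure (hc.comp ?_ (mapsTo_unit_closedStrip z)) continuousOn_const
      (preimage_mono Ioo_subset_Icc_self) closure_verticalStrip_zero_one.ge hζ
    fun_prop

end ThreeLines

/-- Contour shift between the two boundary lines of a strip. -/
theorem integral_ofReal_eq_integral_add {z : ℂ} {g : ℂ → ℂ} {k : ℝ → ℝ}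
    (hc : ContinuousOn g (hStrip z)) (hd : DifferentiableOn ℂ g (interior (hStrip z)))
    (hk : Integrable k) (hk_top : Tendsto k atTop (𝓝 0)) (hk_bot : Tendsto k atBot (𝓝 0))
    (hg : ∀ u ∈ hStrip z, ‖g u‖ ≤ k u.re) :
    ∫ t : ℝ, g t = ∫ t : ℝ, g (t + z) := by
  have him : ∀ t : ℝ, (t : ℂ) + z.im * I ∈ hStrip z := fun t => by simp [mem_hStrip]
  have hint0 : Integrable fun t : ℝ => g t := by
    refine hk.mono' (Continuous.aestronglyMeasurable ?_) (ae_of_all _ fun t => ?_)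
    · exact hc.comp_continuous continuous_ofReal (ofReal_mem_hStrip z)
    · simpa using hg _ (ofReal_mem_hStrip z t)
  have hint1 : Integrable fun t : ℝ => g (t + z.im * I) := by
    refine hk.mono' (Continuous.aestronglyMeasurable ?_) (ae_of_all _ fun t => ?_)
    · exact hc.comp_continuous (by fun_prop) him
    · simpa using hg _ (him t)
  have hside : ∀ {l : Filter ℝ} {m : ℝ → ℝ}, Tendsto (fun T => k (m T)) l (𝓝 0) →
      Tendsto (fun T : ℝ => ∫ y : ℝ in (0 : ℝ)..z.im, g (m T + y * I)) l (𝓝 0) := by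
    intro l m hm
    have hm' : Tendsto (fun T => k (m T) * |z.im - 0|) l (𝓝 0) := by
      simpa using hm.mul_const |z.im - 0|
    refine squeeze_zero_norm (fun T => ?_) hm'
    refine intervalIntegral.norm_integral_le_of_norm_le_const fun y hy => ?_
    have := hg (m T + y * I) (by
      rw [mem_hStrip]
      simpa using uIoc_subset_uIcc hy)
    simpa using this
  have hrect : ∀ T : ℝ, (∫ x : ℝ in (-T)..T, g x) - (∫ x : ℝ in (-T)..T, g (x + z.im * I))
      + I • (∫ y : ℝ in (0 : ℝ)..z.im, g (T + y * I))
      - I • (∫ y : ℝ in (0 : ℝ)..z.im, g ((-T : ℝ) + y * I)) = 0 := by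
    intro T
    have h := integral_boundary_rect_eq_zero_of_continuousOn_of_differentiableOn g
      ((-T : ℝ) : ℂ) (T + z.im * I)
      (hc.mono fun u hu => by simpa [mem_hStrip] using hu.2)
      (hd.mono fun u hu => by
        rw [interior_hStrip]
        simpa using hu.2)
    simpa using h
  have hlim := (((intervalIntegral_tendsto_integral hint0 tendsto_neg_atTop_atBot tendsto_id).sub
    (intervalIntegral_tendsto_integral hint1 tendsto_neg_atTop_atBot tendsto_id)).add
    ((hside (m := id) hk_top).const_smul I)).sub
    ((hside (m := Neg.neg) (hk_bot.comp tendsto_neg_atTop_atBot)).const_smul I)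
  have hzero := tendsto_nhds_unique (hlim.congr fun T => hrect T) tendsto_const_nhds
  have heq : ∫ t : ℝ, g t = ∫ t : ℝ, g (t + z.im * I) := by
    simpa [sub_eq_zero] using hzero
  rw [heq, ← integral_add_right_eq_self (fun t : ℝ => g (t + z.im * I)) z.re]
  refine integral_congr_ae (ae_of_all _ fun t => ?_)
  simp only [ofReal_add, add_assoc, re_add_im]

/-- The integral of `p` against the Gaussian `exp (-c (t - u) ^ 2)` with complex centre `u`. -/
def gaussSmear {E : Type*} [NormedAddCommGroup E] [NormedSpace ℂ E]
    (c : ℝ) (p : ℝ → E) (u : ℂ) : E :=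
  ∫ t : ℝ, cexp (-c * (t - u) ^ 2) • p t

theorem norm_cexp_gauss (c : ℝ) (t u : ℂ) :
    ‖cexp (-c * (t - u) ^ 2)‖ = Real.exp (-c * (((t - u).re) ^ 2 - ((t - u).im) ^ 2)) := by
  rw [norm_exp]
  simp [pow_two]

theorem norm_cexp_gauss_le {c : ℝ} (hc : 0 < c) {R : ℝ} {u : ℂ} (hu : ‖u‖ ≤ R) (t : ℝ) :
    ‖cexp (-c * (t - u) ^ 2)‖ ≤ Real.exp (c * R ^ 2) * Real.exp (-(c / 2) * t ^ 2) := by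
  rw [norm_cexp_gauss, ← Real.exp_add, Real.exp_le_exp]
  have h1 : u.re ^ 2 + u.im ^ 2 ≤ R ^ 2 := by
    have h2 : ‖u‖ ^ 2 ≤ R ^ 2 := pow_le_pow_left₀ (norm_nonneg _) hu 2
    rw [Complex.sq_norm, normSq_apply] at h2
    linarith
  simp only [sub_re, ofReal_re, sub_im, ofReal_im]
  have h3 : 0 ≤ c * ((t - 2 * u.re) ^ 2 / 2 + (R ^ 2 - (u.re ^ 2 + u.im ^ 2))) := by
    have := sub_nonneg.2 h1
    positivity
  linarith

section Gauss

variable {E : Type*} [NormedAddCommGroup E] [NormedSpace ℂ E] {c C : ℝ} {p : ℝ → E}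

theorem integrable_gaussSmear (hc : 0 < c) (hp : Continuous p) (hC : ∀ t, ‖p t‖ ≤ C) (u : ℂ) :
    Integrable fun t : ℝ => cexp (-c * (t - u) ^ 2) • p t := by
  refine Integrable.mono'
    (((integrable_exp_neg_mul_sq (half_pos hc)).const_mul (Real.exp (c * ‖u‖ ^ 2))).mul_const C)
    (Continuous.aestronglyMeasurable (by fun_prop)) (ae_of_all _ fun t => ?_)
  rw [norm_smul]
  gcongr
  exacts [norm_cexp_gauss_le hc le_rfl t, hC t]

theorem differentiable_gaussSmear (hc : 0 < c) (hp : Continuous p) (hC : ∀ t, ‖p t‖ ≤ C) :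
    Differentiable ℂ (gaussSmear c p) := by
  intro u₀
  set R : ℝ := ‖u₀‖ + 1 with hR
  have hR0 : 0 ≤ R := by positivity
  have hC0 : 0 ≤ C := (norm_nonneg _).trans (hC 0)
  have hgauss := integrable_exp_neg_mul_sq (half_pos hc)
  have habs : Integrable fun t : ℝ => |t| * Real.exp (-(c / 2) * t ^ 2) := by
    simpa [abs_mul] using (integrable_mul_exp_neg_mul_sq (half_pos hc)).abs
  refine (hasDerivAt_integral_of_dominated_loc_of_deriv_le
    (F := fun u (t : ℝ) => cexp (-c * (t - u) ^ 2) • p t)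
    (F' := fun u (t : ℝ) => (cexp (-c * (t - u) ^ 2) * (2 * c * (t - u))) • p t)
    (bound := fun t => (2 * c * Real.exp (c * R ^ 2) * C) *
      (|t| * Real.exp (-(c / 2) * t ^ 2) + R * Real.exp (-(c / 2) * t ^ 2)))
    (Metric.ball_mem_nhds u₀ one_pos)
    (Eventually.of_forall fun u => (integrable_gaussSmear hc hp hC u).aestronglyMeasurable)
    (integrable_gaussSmear hc hp hC u₀)
    (Continuous.aestronglyMeasurable (by fun_prop)) (ae_of_all _ fun t u hu => ?_)
    ((habs.add (hgauss.const_mul R)).const_mul _)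
    (ae_of_all _ fun t u hu => ?_)).2.differentiableAt
  · have huR : ‖u‖ ≤ R := by
      have h1 : ‖u - u₀‖ < 1 := by simpa [dist_eq_norm] using hu
      have h2 := norm_add_le (u - u₀) u₀
      rw [sub_add_cancel] at h2
      linarith
    have hlin : ‖2 * (c : ℂ) * (t - u)‖ ≤ 2 * c * (|t| + R) := by
      rw [norm_mul, norm_mul, norm_real, Real.norm_of_nonneg hc.le, Complex.norm_ofNat]
      gcongr
      refine (norm_sub_le _ _).trans ?_
      rw [norm_real, Real.norm_eq_abs]
      gcongr
    calc ‖(cexp (-c * (t - u) ^ 2) * (2 * c * (t - u))) • p t‖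
        ≤ (Real.exp (c * R ^ 2) * Real.exp (-(c / 2) * t ^ 2)) * (2 * c * (|t| + R)) * C := by
          rw [norm_smul, norm_mul]
          gcongr
          exacts [norm_cexp_gauss_le hc huR t, hC t]
      _ = _ := by ring
  · have h1 : HasDerivAt (fun u : ℂ => -c * ((t : ℂ) - u) ^ 2) (2 * c * (t - u)) u := by
      refine ((((hasDerivAt_id' u).const_sub (t : ℂ)).pow 2).const_mul (-c : ℂ)).congr_deriv ?_
      push_cast
      ring
    exact h1.cexp.smul_const (p t)

theorem tendsto_gaussSmear_zero [CompleteSpace E] (hp : Continuous p) (hC : ∀ t, ‖p t‖ ≤ C) :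
    Tendsto (fun n : ℕ => ((((n : ℝ) + 1) / √Real.pi : ℝ) : ℂ) •
      gaussSmear (((n : ℝ) + 1) ^ 2) p 0) atTop (𝓝 (p 0)) := by
  have hscale : ∀ n : ℕ, ((((n : ℝ) + 1) / √Real.pi : ℝ) : ℂ) •
      gaussSmear (((n : ℝ) + 1) ^ 2) p 0 =
      (((√Real.pi)⁻¹ : ℝ) : ℂ) • ∫ s : ℝ, cexp (-(s : ℂ) ^ 2) • p (s / ((n : ℝ) + 1)) := by
    intro n
    have hn : (0 : ℝ) < (n : ℝ) + 1 := by positivity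
    have h := Measure.integral_comp_mul_left
      (fun s : ℝ => cexp (-(s : ℂ) ^ 2) • p (s / ((n : ℝ) + 1))) ((n : ℝ) + 1)
    have h' : gaussSmear (((n : ℝ) + 1) ^ 2) p 0 = (((n : ℝ) + 1)⁻¹ : ℝ) •
        ∫ s : ℝ, cexp (-(s : ℂ) ^ 2) • p (s / ((n : ℝ) + 1)) := by
      rw [abs_of_pos (inv_pos.2 hn)] at h
      rw [← h, gaussSmear]
      refine integral_congr_ae (ae_of_all _ fun t => ?_)
      simp only [mul_div_cancel_left₀ t hn.ne']
      congr 2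
      push_cast
      ring
    rw [h', ← Complex.coe_smul, smul_smul, ← ofReal_mul]
    congr 2
    field_simp
  have hlim : Tendsto (fun n : ℕ => ∫ s : ℝ, cexp (-(s : ℂ) ^ 2) • p (s / ((n : ℝ) + 1))) atTop
      (𝓝 (∫ s : ℝ, cexp (-(s : ℂ) ^ 2) • p 0)) := by
    refine tendsto_integral_of_dominated_convergence (fun s => Real.exp (-1 * s ^ 2) * C)
      (fun n => Continuous.aestronglyMeasurable (by fun_prop))
      ((integrable_exp_neg_mul_sq one_pos).mul_const C)
      (fun n => ae_of_all _ fun s => ?_) (ae_of_all _ fun s => ?_)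
    · rw [norm_smul]
      gcongr
      · rw [norm_exp]
        simp [pow_two]
      · exact hC _
    · refine ((hp.tendsto 0).comp ?_).const_smul _
      have := (tendsto_const_div_atTop_nhds_zero_nat s).comp (tendsto_add_atTop_nat 1)
      simpa [Function.comp_def] using this
  have hval : (((√Real.pi)⁻¹ : ℝ) : ℂ) • (∫ s : ℝ, cexp (-(s : ℂ) ^ 2) • p 0) = p 0 := by
    have hg : ∫ s : ℝ, cexp (-(s : ℂ) ^ 2) = ((√Real.pi : ℝ) : ℂ) := by
      have h := integral_gaussian 1
      simp only [div_one] at h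
      rw [← h, ← integral_complex_ofReal]
      refine integral_congr_ae (ae_of_all _ fun s => ?_)
      push_cast
      simp
    have hpi : √Real.pi ≠ 0 := (Real.sqrt_pos.2 Real.pi_pos).ne'
    rw [integral_smul_const, hg, smul_smul, ← ofReal_mul, inv_mul_cancel₀ hpi]
    simp
  simp_rw [hscale]
  rw [← hval]
  exact hlim.const_smul _

end Gauss

namespace IsOneParamRep

variable {E : Type*} [NormedAddCommGroup E] [NormedSpace ℂ E] {α : ℝ → E →L[ℂ] E}

theorem norm_apply_le_s13 (hα : IsOneParamRep α) (x : E) (t : ℝ) : ‖α t x‖ ≤ ‖x‖ := by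
  simpa using (α t).le_of_opNorm_le (hα.norm_le t) x

theorem apply_add (hα : IsOneParamRep α) (s t : ℝ) (x : E) : α (s + t) x = α s (α t x) := by
  rw [hα.map_add]
  rfl

/-- Weak analytic continuations along a stable set of functionals intertwine the group. -/
theorem weak_continuation_add_ofReal (hα : IsOneParamRep α) {K : Set (E →L[ℂ] ℂ)}
    (hstab : ∀ θ ∈ K, ∀ t : ℝ, θ.comp (α t) ∈ K) {z : ℂ} {v w : E}
    (h : ∀ θ ∈ K, ∃ f : ℂ → ℂ,
      (∃ M : ℝ, ∀ u ∈ hStrip z, ‖f u‖ ≤ M) ∧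
      ContinuousOn f (hStrip z) ∧
      DifferentiableOn ℂ f (interior (hStrip z)) ∧
      (∀ t : ℝ, f t = θ (α t v)) ∧ f z = θ w)
    {θ : E →L[ℂ] ℂ} (hθ : θ ∈ K) {f : ℂ → ℂ} (hbd : ∃ M : ℝ, ∀ u ∈ hStrip z, ‖f u‖ ≤ M)
    (hc : ContinuousOn f (hStrip z)) (hd : DifferentiableOn ℂ f (interior (hStrip z)))
    (hf : ∀ t : ℝ, f t = θ (α t v)) (s : ℝ) : f (z + s) = θ (α s w) := by
  obtain ⟨M, hM⟩ := hbd
  obtain ⟨g, ⟨N, hN⟩, hgc, hgd, hg, hgz⟩ := h _ (hstab θ hθ s)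
  have hzero := eq_zero_of_eq_zero_real (z := z) (g := fun u => f (u + s) - g u)
    ⟨M + N, fun u hu => (norm_sub_le _ _).trans
      (add_le_add (hM _ (add_ofReal_mem_hStrip hu s)) (hN u hu))⟩
    ((hc.comp (by fun_prop) fun u hu => add_ofReal_mem_hStrip hu s).sub hgc)
    ((hd.comp (by fun_prop) fun u hu => add_ofReal_mem_interior_hStrip hu s).sub hgd)
    (fun t => by
      rw [hg, ← ofReal_add, hf, add_comm t s, hα.apply_add]
      simp)
    z (self_mem_hStrip z)
  rw [sub_eq_zero.1 hzero, hgz]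
  rfl

variable [CompleteSpace E] {c : ℝ}

theorem gaussSmear_add_ofReal (hα : IsOneParamRep α) (hc : 0 < c) (x : E) (u : ℂ) (s : ℝ) :
    gaussSmear c (fun t => α t x) (u + s) = α s (gaussSmear c (fun t => α t x) u) := by
  rw [gaussSmear, gaussSmear, ← ContinuousLinearMap.integral_comp_comm _
    (integrable_gaussSmear hc (hα.strong_cont x) (hα.norm_apply_le_s13 x) u),
    ← integral_add_right_eq_self _ s]
  refine integral_congr_ae (ae_of_all _ fun t => ?_)
  simp only [map_smul, ← hα.apply_add, add_comm s t, ofReal_add, add_sub_add_right_eq_sub]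

theorem exists_norm_gaussSmear_le (hα : IsOneParamRep α) (hc : 0 < c) (x : E) (z : ℂ) :
    ∃ M : ℝ, ∀ u ∈ hStrip z, ‖gaussSmear c (fun t => α t x) u‖ ≤ M := by
  have hdiff := differentiable_gaussSmear hc (hα.strong_cont x) (hα.norm_apply_le_s13 x)
  obtain ⟨M, hM⟩ := (isCompact_uIcc (a := (0 : ℝ)) (b := z.im)).exists_bound_of_continuousOn
    (f := fun y : ℝ => gaussSmear c (fun t => α t x) (y * I))
    (hdiff.continuous.comp (by fun_prop)).continuousOn
  refine ⟨M, fun u hu => ?_⟩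
  rw [← re_add_im u, add_comm, hα.gaussSmear_add_ofReal hc]
  exact (hα.norm_apply_le_s13 _ _).trans (hM _ hu)

/-- Smearing `v` and continuing to `z` is the same as smearing `w`. -/
theorem gaussSmear_eq_of_weak_continuation (hα : IsOneParamRep α) {K : Set (E →L[ℂ] ℂ)}
    (hsep : ∀ x : E, (∀ θ ∈ K, θ x = 0) → x = 0)
    (hstab : ∀ θ ∈ K, ∀ t : ℝ, θ.comp (α t) ∈ K) {z : ℂ} {v w : E}
    (h : ∀ θ ∈ K, ∃ f : ℂ → ℂ,
      (∃ M : ℝ, ∀ u ∈ hStrip z, ‖f u‖ ≤ M) ∧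
      ContinuousOn f (hStrip z) ∧
      DifferentiableOn ℂ f (interior (hStrip z)) ∧
      (∀ t : ℝ, f t = θ (α t v)) ∧ f z = θ w)
    (hc : 0 < c) :
    gaussSmear c (fun t => α t v) z = gaussSmear c (fun t => α t w) 0 := by
  refine sub_eq_zero.1 (hsep _ fun θ hθ => ?_)
  obtain ⟨f, ⟨M, hM⟩, hfc, hfd, hf, hfz⟩ := h θ hθ
  have hshift := hα.weak_continuation_add_ofReal hstab h hθ ⟨M, hM⟩ hfc hfd hf
  have hM0 : 0 ≤ M := (norm_nonneg _).trans (hM z (self_mem_hStrip z))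
  rw [map_sub, sub_eq_zero, gaussSmear, gaussSmear,
    ← ContinuousLinearMap.integral_comp_comm _
      (integrable_gaussSmear hc (hα.strong_cont v) (hα.norm_apply_le_s13 v) z),
    ← ContinuousLinearMap.integral_comp_comm _
      (integrable_gaussSmear hc (hα.strong_cont w) (hα.norm_apply_le_s13 w) 0)]
  set k₀ : ℝ → ℝ := fun x => Real.exp (-c * x ^ 2) with hk₀
  have hk₀_top : Tendsto k₀ atTop (𝓝 0) := by
    refine Real.tendsto_exp_atBot.comp ?_
    exact (tendsto_pow_atTop two_ne_zero).const_mul_atTop_of_neg (neg_lt_zero.2 hc)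
  have hk₀_bot : Tendsto k₀ atBot (𝓝 0) := by
    refine (hk₀_top.comp tendsto_neg_atBot_atTop).congr fun x => ?_
    simp [hk₀]
  have hcont := integral_ofReal_eq_integral_add (z := z)
    (g := fun u => cexp (-c * (u - z) ^ 2) * f u)
    (k := fun x => Real.exp (c * z.im ^ 2) * M * k₀ (x - z.re))
    ((Continuous.continuousOn (by fun_prop)).mul hfc)
    (DifferentiableOn.mul (by fun_prop) hfd)
    (((integrable_exp_neg_mul_sq hc).comp_sub_right z.re).const_mul _)
    (by simpa [← sub_eq_add_neg] using (hk₀_top.comp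
      (tendsto_atTop_add_const_right _ (-z.re) tendsto_id)).const_mul (Real.exp (c * z.im ^ 2) * M))
    (by simpa [← sub_eq_add_neg] using (hk₀_bot.comp
      (tendsto_atBot_add_const_right _ (-z.re) tendsto_id)).const_mul (Real.exp (c * z.im ^ 2) * M))
    (fun u hu => by
      have him : (u.im - z.im) ^ 2 ≤ z.im ^ 2 := by
        rw [mem_hStrip, mem_uIcc] at hu
        rcases hu with ⟨h0, h1⟩ | ⟨h0, h1⟩ <;> nlinarith
      calc ‖cexp (-c * (u - z) ^ 2) * f u‖
          ≤ (Real.exp (c * z.im ^ 2) * k₀ (u.re - z.re)) * M := by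
            rw [norm_mul, norm_cexp_gauss, hk₀, ← Real.exp_add]
            gcongr
            · simp only [sub_re, sub_im]
              nlinarith
            · exact hM u hu
        _ = _ := by ring)
  calc ∫ t : ℝ, θ (cexp (-c * (t - z) ^ 2) • α t v)
      = ∫ t : ℝ, cexp (-c * (t - z) ^ 2) * f t := by simp [hf]
    _ = ∫ t : ℝ, cexp (-c * (t + z - z) ^ 2) * f (t + z) := hcont
    _ = _ := by simp [add_comm _ z, hshift]

end IsOneParamRep

/-- If `K ⊆ E*` is separating and stable under precomposition with every `α_t`, and if for
every `θ ∈ K` there is a bounded continuous function `f_θ` on `S(z)`, analytic in the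
interior, with `f_θ t = θ (α_t v)` on `ℝ` and `f_θ z = θ w`, then `v ∈ D(α_z)` and
`α_z v = w`. -/
theorem weakly_analytic_implies_in_domain
    {E : Type*} [NormedAddCommGroup E] [NormedSpace ℂ E] [CompleteSpace E]
    {α : ℝ → E →L[ℂ] E} (hα : IsOneParamRep α)
    (K : Set (E →L[ℂ] ℂ))
    (hsep : ∀ x : E, (∀ θ ∈ K, θ x = 0) → x = 0)
    (hstab : ∀ θ ∈ K, ∀ t : ℝ, θ.comp (α t) ∈ K)
    (z : ℂ) (v w : E)
    (h : ∀ θ ∈ K, ∃ f : ℂ → ℂ,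
      (∃ M : ℝ, ∀ u ∈ hStrip z, ‖f u‖ ≤ M) ∧
      ContinuousOn f (hStrip z) ∧
      DifferentiableOn ℂ f (interior (hStrip z)) ∧
      (∀ t : ℝ, f t = θ (α t v)) ∧ f z = θ w) :
    HasContVal α z v w := by
  have hpos : ∀ n : ℕ, 0 < ((n : ℝ) + 1) ^ 2 := fun n => by positivity
  set G : E → ℕ → ℂ → E := fun x n u => ((((n : ℝ) + 1) / √Real.pi : ℝ) : ℂ) •
    gaussSmear (((n : ℝ) + 1) ^ 2) (fun t => α t x) u with hG
  have hlim : ∀ x, Tendsto (fun n => G x n 0) atTop (𝓝 x) := fun x => by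
    simpa [hG, hα.map_zero] using
      tendsto_gaussSmear_zero (hα.strong_cont x) (hα.norm_apply_le_s13 x)
  have hGdiff : ∀ n, Differentiable ℂ (G v n) := fun n =>
    (differentiable_gaussSmear (hpos n) (hα.strong_cont v) (hα.norm_apply_le_s13 v)).const_smul _
  have hGadd : ∀ n u (s : ℝ), G v n (u + s) = α s (G v n u) := fun n u s => by
    simp only [hG, hα.gaussSmear_add_ofReal (hpos n), map_smul]
  have hGreal : ∀ n (s : ℝ), G v n s = α s (G v n 0) := fun n s => by
    rw [← hGadd, zero_add]
  have hGz : ∀ n, G v n z = G w n 0 := fun n => by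
    simp only [hG, hα.gaussSmear_eq_of_weak_continuation hsep hstab h (hpos n)]
  have hGbd : ∀ n, ∃ M : ℝ, ∀ u ∈ hStrip z, ‖G v n u‖ ≤ M := fun n => by
    obtain ⟨M, hM⟩ := hα.exists_norm_gaussSmear_le (hpos n) v z
    refine ⟨‖((((n : ℝ) + 1) / √Real.pi : ℝ) : ℂ)‖ * M, fun u hu => ?_⟩
    rw [hG, norm_smul]
    exact mul_le_mul_of_nonneg_left (hM u hu) (norm_nonneg _)
  have hcauchy : UniformCauchySeqOn (G v) atTop (hStrip z) := by
    rw [Metric.uniformCauchySeqOn_iff]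
    intro ε hε
    obtain ⟨N₁, hN₁⟩ := Metric.cauchySeq_iff.1 (hlim v).cauchySeq (ε / 2) (half_pos hε)
    obtain ⟨N₂, hN₂⟩ := Metric.cauchySeq_iff.1 (hlim w).cauchySeq (ε / 2) (half_pos hε)
    refine ⟨max N₁ N₂, fun m hm n hn u hu => ?_⟩
    have h1 := (hN₁ m (le_of_max_le_left hm) n (le_of_max_le_left hn)).le
    have h2 := (hN₂ m (le_of_max_le_right hm) n (le_of_max_le_right hn)).le
    rw [dist_eq_norm] at h1 h2 ⊢
    obtain ⟨M, hM⟩ := hGbd m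
    obtain ⟨M', hM'⟩ := hGbd n
    refine (norm_le_of_norm_le_boundary (g := fun u => G v m u - G v n u)
      ⟨M + M', fun u hu => (norm_sub_le _ _).trans (add_le_add (hM u hu) (hM' u hu))⟩
      ((hGdiff m).sub (hGdiff n)).continuous.continuousOn
      ((hGdiff m).sub (hGdiff n)).differentiableOn (C := ε / 2) (fun t => ?_) (fun t => ?_)
      u hu).trans_lt (half_lt_self hε)
    · rw [hGreal, hGreal, ← map_sub]
      exact (hα.norm_apply_le_s13 _ _).trans h1
    · rw [hGadd, hGadd, ← map_sub, hGz, hGz]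
      exact (hα.norm_apply_le_s13 _ _).trans h2
  have hex : ∀ u : ℂ, ∃ l : E, u ∈ hStrip z → Tendsto (fun n => G v n u) atTop (𝓝 l) := by
    intro u
    by_cases hu : u ∈ hStrip z
    · obtain ⟨l, hl⟩ := cauchySeq_tendsto_of_complete (hcauchy.cauchySeq hu)
      exact ⟨l, fun _ => hl⟩
    · exact ⟨0, fun hu' => absurd hu' hu⟩
  choose F hF using hex
  have hunif : TendstoUniformlyOn (G v) F atTop (hStrip z) :=
    hcauchy.tendstoUniformlyOn_of_tendsto hF
  refine ⟨F, hunif.continuousOn (Frequently.of_forall fun n => (hGdiff n).continuous.continuousOn),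
    (hunif.mono interior_subset).tendstoLocallyUniformlyOn.differentiableOn
      (Eventually.of_forall fun n => (hGdiff n).differentiableOn) isOpen_interior,
    fun t => ?_, ?_⟩
  · refine tendsto_nhds_unique (hF t (ofReal_mem_hStrip z t)) ?_
    simp_rw [hGreal]
    exact ((α t).continuous.tendsto v).comp (hlim v)
  · refine tendsto_nhds_unique (hF z (self_mem_hStrip z)) ?_
    simp_rw [hGz]
    exact hlim w
end
end
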